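/- arXiv:2507.22284 — 2 statements merged into one kernel-verified Lean document; each statement's English description precedes it below -/
import Mathlib

section
/- If P and Q are polytopes lying in orthogonal complementary subspaces of R^d, each containing the origin in its relative interior, with dim P = p and dim Q = q and p + q = d, then the number of full flags of the convex hull conv(P ∪ Q) satisfies flags(conv(P ∪ Q)) = flags(P) · flags(Q) · binom(d, p). -/
open RealInnerProductSpace

noncomputable section

abbrev Euc (d : ℕ) := EuclideanSpace ℝ (Fin d)

/-- A polytope is the convex hull of a finite set of points. -/
def IsPolytope {d : ℕ} (P : Set (Euc d)) : Prop :=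
  ∃ V : Set (Euc d), V.Finite ∧ P = convexHull ℝ V

/-- The dimension of a subset: the rank of its vector span (direction of its affine hull). -/
noncomputable def sdim {d : ℕ} (F : Set (Euc d)) : ℕ :=
  Module.finrank ℝ (vectorSpan ℝ F)

/-- A full flag of a `k`-dimensional polytope `P`: a chain of nonempty faces,
one in each dimension `0, …, k-1`.  For indices `≥ k` the face is `P` itself by convention. -/
structure FullFlag {d : ℕ} (P : Set (Euc d)) (k : ℕ) where
  face : ℕ → Set (Euc d)
  exposed : ∀ i < k, IsExposed ℝ P (face i)
  nonempty : ∀ i < k, (face i).Nonempty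
  dim_eq : ∀ i < k, sdim (face i) = i
  chain : ∀ i j : ℕ, i < j → j < k → face i ⊆ face j
  top : ∀ i, k ≤ i → face i = P

/-- proper face (possibly empty) -/
def PF {d : ℕ} (P F : Set (Euc d)) : Prop :=
  ∃ l : Euc d →L[ℝ] ℝ, (∀ x ∈ P, l x ≤ 1) ∧ F = {x ∈ P | l x = 1}

def rk {d : ℕ} (F : Set (Euc d)) : ℕ := Module.finrank ℝ (Submodule.span ℝ F)

theorem PF.sub {d : ℕ} {P F : Set (Euc d)} (h : PF P F) : F ⊆ P := by
  obtain ⟨l, h1, rfl⟩ := h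
  exact fun x hx => hx.1

theorem rk_mono {d : ℕ} {F G : Set (Euc d)} (h : F ⊆ G) : rk F ≤ rk G :=
  Submodule.finrank_mono (Submodule.span_mono h)

theorem PF.eq_of_rk {d : ℕ} {P F G : Set (Euc d)} (hF : PF P F) (hG : PF P G) (h : F ⊆ G)
    (hr : rk F = rk G) : F = G := by
  obtain ⟨l, h1, hl⟩ := hF
  obtain ⟨m, h2, hm⟩ := hG
  have hs : Submodule.span ℝ F = Submodule.span ℝ G :=
    Submodule.eq_of_le_of_finrank_eq (Submodule.span_mono h) hr
  apply Set.Subset.antisymm h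
  intro x hx
  have hx' : x ∈ Submodule.span ℝ F := hs ▸ Submodule.subset_span hx
  have hsub : Submodule.span ℝ F ≤ LinearMap.ker ((l - m : Euc d →L[ℝ] ℝ) : Euc d →ₗ[ℝ] ℝ) := by
    rw [Submodule.span_le]
    intro y hy
    have a1 : l y = 1 := by rw [hl] at hy; exact hy.2
    have a2 : m y = 1 := by have := h hy; rw [hm] at this; exact this.2
    simp [a1, a2]
  have h3 := hsub hx'
  rw [hm] at hx
  rw [hl]
  refine ⟨hx.1, ?_⟩
  simp at h3
  linarith [hx.2]

theorem rk_eq_sdim {d : ℕ} {P : Set (Euc d)} (h : (0 : Euc d) ∈ P) : rk P = sdim P := by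
  unfold rk sdim
  rw [vectorSpan_eq_span_vsub_set_right ℝ h]
  have : ((fun x : Euc d => x -ᵥ (0 : Euc d)) '' P) = P := by
    simp only [vsub_eq_sub, sub_zero, Set.image_id']
  rw [this]

theorem PF.rk_succ {d : ℕ} {P F : Set (Euc d)} (hF : PF P F) (hn : F.Nonempty) :
    rk F = sdim F + 1 := by
  obtain ⟨l, h1, hl⟩ := hF
  obtain ⟨x0, hx0⟩ := hn
  have hlF : ∀ y ∈ F, l y = 1 := fun y hy => by rw [hl] at hy; exact hy.2
  have hs : Submodule.span ℝ F = vectorSpan ℝ F ⊔ Submodule.span ℝ {x0} := by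
    apply le_antisymm
    · rw [Submodule.span_le]
      intro y hy
      have : y = (y - x0) + x0 := by simp
      rw [this]
      exact Submodule.add_mem_sup (vsub_mem_vectorSpan ℝ hy hx0) (Submodule.mem_span_singleton_self x0)
    · apply sup_le
      · rw [vectorSpan_def, Submodule.span_le]
        rintro _ ⟨a, ha, b, hb, rfl⟩
        exact Submodule.sub_mem _ (Submodule.subset_span ha) (Submodule.subset_span hb)
      · exact Submodule.span_mono (by simpa using hx0)
  have hk : vectorSpan ℝ F ≤ LinearMap.ker (l : Euc d →ₗ[ℝ] ℝ) := by
    rw [vectorSpan_def, Submodule.span_le]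
    rintro _ ⟨a, ha, b, hb, rfl⟩
    simp [hlF a ha, hlF b hb]
  have hx0ne : x0 ≠ 0 := by
    rintro rfl
    have := hlF 0 hx0
    simp at this
  have hd : vectorSpan ℝ F ⊓ Submodule.span ℝ {x0} = ⊥ := by
    rw [eq_bot_iff]
    rintro y ⟨hy1, hy2⟩
    obtain ⟨c, rfl⟩ := Submodule.mem_span_singleton.1 hy2
    have := hk hy1
    simp [hlF x0 hx0] at this
    simp [this]
  have := Submodule.finrank_sup_add_finrank_inf_eq (vectorSpan ℝ F) (Submodule.span ℝ {x0})
  rw [hd, finrank_span_singleton hx0ne, ← hs] at this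
  simpa [rk, sdim] using this

theorem pf_empty {d : ℕ} (P : Set (Euc d)) : PF P ∅ := ⟨0, by simp, by simp⟩

theorem rk_empty {d : ℕ} : rk (∅ : Set (Euc d)) = 0 := by simp [rk]

theorem PF.empty_of_rk {d : ℕ} {P F : Set (Euc d)} (hF : PF P F) (h : rk F = 0) : F = ∅ :=
  ((pf_empty P).eq_of_rk hF (Set.empty_subset _) (by rw [h, rk_empty])).symm

/-- `0` is in the relative interior, functional version -/
def Z {d : ℕ} (P : Set (Euc d)) : Prop :=
  (0 : Euc d) ∈ P ∧ ∀ l : Euc d →L[ℝ] ℝ, (∀ x ∈ P, l x ≤ 0) → ∀ x ∈ P, l x = 0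

theorem z_of_int {d : ℕ} {P : Set (Euc d)} (h : (0 : Euc d) ∈ intrinsicInterior ℝ P) : Z P := by
  refine ⟨intrinsicInterior_subset h, fun l hl x hx => le_antisymm (hl x hx) ?_⟩
  obtain ⟨y, hy, hy0⟩ := h
  have h0 : (0 : Euc d) ∈ affineSpan ℝ P := hy0 ▸ y.2
  have hxs : x ∈ affineSpan ℝ P := subset_affineSpan ℝ P hx
  let γ : ℝ → affineSpan ℝ P := fun t => ⟨AffineMap.lineMap (0 : Euc d) x t,
    AffineMap.lineMap_mem t h0 hxs⟩
  have hγ : Continuous γ := by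
    apply Continuous.subtype_mk
    exact AffineMap.lineMap_continuous
  have hγ0 : γ 0 = y := by
    apply Subtype.ext
    simp [γ, hy0]
  have hmem : ∀ᶠ t in nhds (0 : ℝ), γ t ∈ ((↑) ⁻¹' P : Set (affineSpan ℝ P)) := by
    apply hγ.continuousAt.eventually_mem
    rw [hγ0]
    exact mem_interior_iff_mem_nhds.1 hy
  obtain ⟨ε, hε, hb⟩ := Metric.eventually_nhds_iff.1 hmem
  have := @hb (-(ε/2)) (by simp [abs_of_pos hε]; linarith)
  have h2 := hl _ this
  simp [γ, AffineMap.lineMap_apply] at h2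
  by_contra hneg
  push Not at hneg
  nlinarith

theorem PF.exposed {d : ℕ} {P F : Set (Euc d)} (h : PF P F) : IsExposed ℝ P F := by
  obtain ⟨l, h1, rfl⟩ := h
  rintro ⟨x, hx⟩
  refine ⟨l, ?_⟩
  ext y
  constructor
  · rintro ⟨hy, hy1⟩
    exact ⟨hy, fun z hz => by rw [hy1]; exact h1 z hz⟩
  · rintro ⟨hy, hy1⟩
    refine ⟨hy, le_antisymm (h1 y hy) ?_⟩
    have := hy1 x hx.1
    rw [hx.2] at this
    exact this

theorem pf_of_exposed {d : ℕ} {P F : Set (Euc d)} (hz : Z P) (h : IsExposed ℝ P F)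
    (hn : F.Nonempty) (hd : sdim F < sdim P) : PF P F := by
  obtain ⟨l, hl⟩ := h hn
  obtain ⟨x, hx⟩ := hn
  have hx' := hx
  rw [hl] at hx'
  have hM : 0 ≤ l x := by simpa using hx'.2 0 hz.1
  rcases hM.eq_or_lt with hM | hM
  · exfalso
    have hz2 := hz.2 l (fun y hy => by rw [hM]; exact hx'.2 y hy)
    have : F = P := by
      rw [hl]
      ext y
      exact ⟨fun hy => hy.1, fun hy => ⟨hy, fun z hzz => by rw [hz2 z hzz, hz2 y hy]⟩⟩
    rw [this] at hd
    exact lt_irrefl _ hd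
  · refine ⟨(l x)⁻¹ • l, fun y hy => ?_, ?_⟩
    · simp
      rw [inv_mul_le_iff₀ hM]
      simpa using hx'.2 y hy
    · rw [hl]
      ext y
      simp only [Set.mem_ofPred_eq, smul_apply, smul_eq_mul]
      refine and_congr_right fun hy => ⟨fun h => ?_, fun h z hzz => ?_⟩
      · rw [inv_mul_eq_one₀ hM.ne']
        exact le_antisymm (h x hx'.1) (hx'.2 y hy)
      · rw [inv_mul_eq_one₀ hM.ne'] at h
        rw [← h]
        exact hx'.2 z hzz

theorem PF.rk_le {d : ℕ} {P F : Set (Euc d)} (hz : Z P) (h : PF P F) : rk F ≤ sdim P := by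
  rw [← rk_eq_sdim hz.1]
  exact rk_mono h.sub

theorem join_face {d : ℕ} {P Q : Set (Euc d)} (hP : Convex ℝ P) (hQ : Convex ℝ Q)
    (hPn : P.Nonempty) (hQn : Q.Nonempty) (l : Euc d →L[ℝ] ℝ) (h1 : ∀ x ∈ P, l x ≤ 1)
    (h2 : ∀ x ∈ Q, l x ≤ 1) :
    {x ∈ convexHull ℝ (P ∪ Q) | l x = 1} =
      convexHull ℝ ({x ∈ P | l x = 1} ∪ {x ∈ Q | l x = 1}) := by
  apply Set.Subset.antisymm
  · rintro x ⟨hx, hx1⟩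
    rw [hP.convexHull_union hQ hPn hQn, mem_convexJoin] at hx
    obtain ⟨u, hu, v, hv, a, b, ha, hb, hab, rfl⟩ := hx
    simp at hx1
    have e1 := h1 u hu
    have e2 := h2 v hv
    rcases ha.eq_or_lt with rfl | ha
    · have : b = 1 := by linarith
      subst this
      apply subset_convexHull
      right
      refine ⟨by simpa using hv, by simpa using hx1⟩
    rcases hb.eq_or_lt with rfl | hb
    · have : a = 1 := by linarith
      subst this
      apply subset_convexHull
      left
      refine ⟨by simpa using hu, by simpa using hx1⟩
    have f1 : l u = 1 := by nlinarith
    have f2 : l v = 1 := by nlinarith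
    have m1 : u ∈ convexHull ℝ ({x ∈ P | l x = 1} ∪ {x ∈ Q | l x = 1}) :=
      subset_convexHull ℝ _ (Or.inl ⟨hu, f1⟩)
    have m2 : v ∈ convexHull ℝ ({x ∈ P | l x = 1} ∪ {x ∈ Q | l x = 1}) :=
      subset_convexHull ℝ _ (Or.inr ⟨hv, f2⟩)
    exact convex_convexHull ℝ _ m1 m2 ha.le hb.le hab
  · intro x hx
    refine ⟨convexHull_mono (Set.union_subset_union (fun y hy => hy.1) (fun y hy => hy.1)) hx, ?_⟩
    have : convexHull ℝ ({x ∈ P | l x = 1} ∪ {x ∈ Q | l x = 1}) ⊆ {x | l x = 1} := by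
      apply convexHull_min
      · rintro y (hy | hy) <;> exact hy.2
      · exact convex_hyperplane l.isLinear 1
    exact this hx

theorem hull_le {d : ℕ} {R : Set (Euc d)} (l : Euc d →L[ℝ] ℝ) (c : ℝ) (h : ∀ x ∈ R, l x ≤ c) :
    ∀ x ∈ convexHull ℝ R, l x ≤ c := by
  have : convexHull ℝ R ⊆ {x | l x ≤ c} :=
    convexHull_min h (convex_halfSpace_le l.isLinear c)
  exact this

theorem z_join {d : ℕ} {P Q : Set (Euc d)} (hP : Z P) (hQ : Z Q) : Z (convexHull ℝ (P ∪ Q)) := by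
  refine ⟨subset_convexHull ℝ _ (Or.inl hP.1), fun l hl => ?_⟩
  have a := hP.2 l (fun x hx => hl x (subset_convexHull ℝ _ (Or.inl hx)))
  have b := hQ.2 l (fun x hx => hl x (subset_convexHull ℝ _ (Or.inr hx)))
  intro x hx
  apply le_antisymm (hl x hx)
  have := hull_le (-l) 0 (R := P ∪ Q) (by
    rintro y (hy | hy)
    · simp [a y hy]
    · simp [b y hy]) x hx
  simpa using this

theorem span_hull {d : ℕ} (R : Set (Euc d)) :
    Submodule.span ℝ (convexHull ℝ R) = Submodule.span ℝ R := by
  apply le_antisymm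
  · rw [Submodule.span_le]
    exact convexHull_min Submodule.subset_span (Submodule.convex _)
  · exact Submodule.span_mono (subset_convexHull ℝ R)

theorem rk_join {d : ℕ} {U : Submodule ℝ (Euc d)} {F G : Set (Euc d)} (hF : F ⊆ U)
    (hG : G ⊆ (Uᗮ : Submodule ℝ (Euc d))) : rk (convexHull ℝ (F ∪ G)) = rk F + rk G := by
  unfold rk
  rw [span_hull, Submodule.span_union, ← Submodule.finrank_sup_add_finrank_inf_eq]
  have : Submodule.span ℝ F ⊓ Submodule.span ℝ G = ⊥ := by
    rw [eq_bot_iff, ← U.inf_orthogonal_eq_bot]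
    exact inf_le_inf (Submodule.span_le.2 hF) (Submodule.span_le.2 hG)
  rw [this]
  simp

theorem pf_split {d : ℕ} {P Q H : Set (Euc d)} (hP : Convex ℝ P) (hQ : Convex ℝ Q)
    (hPn : P.Nonempty) (hQn : Q.Nonempty) (h : PF (convexHull ℝ (P ∪ Q)) H) :
    PF P (H ∩ P) ∧ PF Q (H ∩ Q) ∧ convexHull ℝ ((H ∩ P) ∪ (H ∩ Q)) = H := by
  obtain ⟨l, h1, rfl⟩ := h
  have hp : ∀ x ∈ P, l x ≤ 1 := fun x hx => h1 x (subset_convexHull ℝ _ (Or.inl hx))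
  have hq : ∀ x ∈ Q, l x ≤ 1 := fun x hx => h1 x (subset_convexHull ℝ _ (Or.inr hx))
  have e1 : {x ∈ convexHull ℝ (P ∪ Q) | l x = 1} ∩ P = {x ∈ P | l x = 1} := by
    ext x
    exact ⟨fun h => ⟨h.2, h.1.2⟩, fun h => ⟨⟨subset_convexHull ℝ _ (Or.inl h.1), h.2⟩, h.1⟩⟩
  have e2 : {x ∈ convexHull ℝ (P ∪ Q) | l x = 1} ∩ Q = {x ∈ Q | l x = 1} := by
    ext x
    exact ⟨fun h => ⟨h.2, h.1.2⟩, fun h => ⟨⟨subset_convexHull ℝ _ (Or.inr h.1), h.2⟩, h.1⟩⟩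
  rw [e1, e2]
  exact ⟨⟨l, hp, rfl⟩, ⟨l, hq, rfl⟩, (join_face hP hQ hPn hQn l hp hq).symm⟩

theorem pf_join {d : ℕ} {U : Submodule ℝ (Euc d)} {P Q F G : Set (Euc d)} (hP : Convex ℝ P)
    (hQ : Convex ℝ Q) (hPn : P.Nonempty) (hQn : Q.Nonempty) (hPU : P ⊆ U)
    (hQU : Q ⊆ (Uᗮ : Submodule ℝ (Euc d))) (hF : PF P F) (hG : PF Q G) :
    PF (convexHull ℝ (P ∪ Q)) (convexHull ℝ (F ∪ G)) ∧ convexHull ℝ (F ∪ G) ∩ P = F ∧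
      convexHull ℝ (F ∪ G) ∩ Q = G := by
  obtain ⟨l, hl, rfl⟩ := hF
  obtain ⟨m, hm, rfl⟩ := hG
  let n : Euc d →L[ℝ] ℝ := l.comp U.starProjection + m.comp Uᗮ.starProjection
  have n1 : ∀ x ∈ P, n x = l x := fun x hx => by
    have a : U.starProjection x = x := Submodule.starProjection_eq_self_iff.2 (hPU hx)
    have b : Uᗮ.starProjection x = 0 := by
      rw [Submodule.starProjection_apply_eq_zero_iff, Submodule.orthogonal_orthogonal]
      exact hPU hx
    simp [n, a, b]
  have n2 : ∀ x ∈ Q, n x = m x := fun x hx => by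
    have a : U.starProjection x = 0 := by
      rw [Submodule.starProjection_apply_eq_zero_iff]
      exact hQU hx
    have b : Uᗮ.starProjection x = x := Submodule.starProjection_eq_self_iff.2 (hQU hx)
    simp [n, a, b]
  have e1 : {x ∈ P | l x = 1} = {x ∈ P | n x = 1} := by
    ext x
    exact and_congr_right fun hx => by rw [n1 x hx]
  have e2 : {x ∈ Q | m x = 1} = {x ∈ Q | n x = 1} := by
    ext x
    exact and_congr_right fun hx => by rw [n2 x hx]
  have hp : ∀ x ∈ P, n x ≤ 1 := fun x hx => by rw [n1 x hx]; exact hl x hx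
  have hq : ∀ x ∈ Q, n x ≤ 1 := fun x hx => by rw [n2 x hx]; exact hm x hx
  rw [e1, e2, ← join_face hP hQ hPn hQn n hp hq]
  refine ⟨⟨n, hull_le n 1 ?_, rfl⟩, ?_, ?_⟩
  · rintro x (hx | hx)
    · exact hp x hx
    · exact hq x hx
  · ext x
    exact ⟨fun h => ⟨h.2, h.1.2⟩, fun h => ⟨⟨subset_convexHull ℝ _ (Or.inl h.1), h.2⟩, h.1⟩⟩
  · ext x
    exact ⟨fun h => ⟨h.2, h.1.2⟩, fun h => ⟨⟨subset_convexHull ℝ _ (Or.inr h.1), h.2⟩, h.1⟩⟩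

/-- chains of proper faces, indexed by rank -/
structure IsRF {d : ℕ} (P : Set (Euc d)) (k : ℕ) (c : ℕ → Set (Euc d)) : Prop where
  pf : ∀ i ≤ k, PF P (c i)
  rk : ∀ i ≤ k, rk (c i) = i
  mono : ∀ i j, i ≤ j → j ≤ k → c i ⊆ c j
  top : ∀ i, k < i → c i = P

theorem FullFlag.ext' {d : ℕ} {P : Set (Euc d)} {k : ℕ} {a b : FullFlag P k}
    (h : a.face = b.face) : a = b := by
  cases a; cases b; cases h; rfl

def flagEquiv {d : ℕ} {P : Set (Euc d)} {k : ℕ} (hz : Z P) (hk : sdim P = k) :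
    FullFlag P k ≃ {c : ℕ → Set (Euc d) // IsRF P k c} where
  toFun f := ⟨fun i => Nat.casesOn i ∅ f.face, by
    have hpf : ∀ i < k, PF P (f.face i) := fun i hi =>
      pf_of_exposed hz (f.exposed i hi) (f.nonempty i hi) (by rw [f.dim_eq i hi, hk]; exact hi)
    refine ⟨?_, ?_, ?_, ?_⟩
    · rintro (_ | i) hi
      · exact pf_empty P
      · exact hpf i hi
    · rintro (_ | i) hi
      · exact rk_empty
      · have := (hpf i hi).rk_succ (f.nonempty i hi)
        rw [f.dim_eq i hi] at this
        exact this
    · rintro (_ | i) (_ | j) hij hj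
      · exact Set.Subset.rfl
      · exact Set.empty_subset _
      · omega
      · rcases (Nat.le_of_succ_le_succ hij).eq_or_lt with rfl | h
        · exact Set.Subset.rfl
        · exact f.chain i j h hj
    · rintro (_ | i) hi
      · omega
      · exact f.top i (by omega)⟩
  invFun c :=
    have hne : ∀ i < k, (c.1 (i+1)).Nonempty := fun i hi => by
      rw [Set.nonempty_iff_ne_empty]
      intro h
      have := c.2.rk (i+1) hi
      rw [h, rk_empty] at this
      omega
    { face := fun i => c.1 (i+1)
      exposed := fun i hi => (c.2.pf (i+1) hi).exposed
      nonempty := hne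
      dim_eq := fun i hi => by
        have h1 := (c.2.pf (i+1) hi).rk_succ (hne i hi)
        have h2 := c.2.rk (i+1) hi
        omega
      chain := fun i j hij hj => c.2.mono _ _ (by omega) hj
      top := fun i hi => c.2.top _ (by omega) }
  left_inv f := FullFlag.ext' rfl
  right_inv c := by
    apply Subtype.ext
    funext i
    rcases i with _ | i
    · exact ((c.2.pf 0 (Nat.zero_le _)).empty_of_rk (c.2.rk 0 (Nat.zero_le _))).symm
    · rfl

def aS (S : Finset ℕ) (i : ℕ) : ℕ := (S.filter (· < i)).card

theorem aS_zero (S : Finset ℕ) : aS S 0 = 0 := by simp [aS]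

theorem aS_succ (S : Finset ℕ) (i : ℕ) : aS S (i+1) = aS S i + if i ∈ S then 1 else 0 := by
  unfold aS
  split_ifs with h
  · rw [← Finset.card_insert_of_notMem (a := i) (s := S.filter (· < i)) (by simp)]
    congr 1
    ext x
    simp only [Finset.mem_filter, Finset.mem_insert]
    constructor
    · rintro ⟨a, b⟩
      by_cases hx : x = i
      · exact Or.inl hx
      · exact Or.inr ⟨a, by omega⟩
    · rintro (rfl | ⟨a, b⟩)
      · exact ⟨h, by omega⟩
      · exact ⟨a, by omega⟩
  · rw [add_zero]
    congr 1
    ext x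
    simp only [Finset.mem_filter]
    refine and_congr_right fun hx => ?_
    have : x ≠ i := by rintro rfl; exact h hx
    omega

theorem aS_le (S : Finset ℕ) (i : ℕ) : aS S i ≤ i := by
  induction i with
  | zero => simp [aS_zero]
  | succ i ih => rw [aS_succ]; split_ifs <;> omega

theorem aS_mono (S : Finset ℕ) {i j : ℕ} (h : i ≤ j) : aS S i ≤ aS S j := by
  induction j, h using Nat.le_induction with
  | base => exact le_rfl
  | succ j hj ih => rw [aS_succ]; omega

theorem bS_mono (S : Finset ℕ) {i j : ℕ} (h : i ≤ j) : i - aS S i ≤ j - aS S j := by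
  induction j, h using Nat.le_induction with
  | base => exact le_rfl
  | succ j hj ih =>
    have := aS_le S j
    rw [aS_succ]; split_ifs <;> omega

theorem aS_full {S : Finset ℕ} {d : ℕ} (h : S ⊆ Finset.range d) : aS S d = S.card := by
  unfold aS
  congr 1
  ext x
  simp only [Finset.mem_filter, and_iff_left_iff_imp]
  intro hx
  exact Finset.mem_range.1 (h hx)

theorem divt (f : ℕ → ℕ) (d : ℕ) (h0 : f 0 = 0) (hs : ∀ i < d, f (i+1) ≤ f i + 1) (j : ℕ)
    (hj : j ≤ f d) : ∃ i ≤ d, f i = j := by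
  induction d with
  | zero => exact ⟨0, le_rfl, by omega⟩
  | succ d ih =>
    by_cases h : j ≤ f d
    · obtain ⟨i, hi, e⟩ := ih (fun i hi => hs i (by omega)) h
      exact ⟨i, by omega, e⟩
    · have := hs d (by omega)
      exact ⟨d+1, le_rfl, by omega⟩

theorem aS_path (f : ℕ → ℕ) (d : ℕ) (h0 : f 0 = 0)
    (hs : ∀ i < d, f (i+1) = f i ∨ f (i+1) = f i + 1) :
    ∀ i ≤ d, aS ((Finset.range d).filter (fun i => f (i+1) = f i + 1)) i = f i := by
  intro i
  induction i with
  | zero => intro _; rw [aS_zero, h0]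
  | succ i ih =>
    intro hi
    rw [aS_succ, ih (by omega)]
    have := hs i (by omega)
    simp only [Finset.mem_filter, Finset.mem_range]
    split_ifs with h
    · omega
    · have : ¬ f (i+1) = f i + 1 := fun h' => h ⟨by omega, h'⟩
      omega

theorem aS_inj {S T : Finset ℕ} {d : ℕ} (hS : S ⊆ Finset.range d) (hT : T ⊆ Finset.range d)
    (h : ∀ i ≤ d, aS S i = aS T i) : S = T := by
  have key : ∀ i < d, (i ∈ S ↔ i ∈ T) := by
    intro i hi
    have h1 := h i hi.le
    have h2 := h (i+1) hi
    rw [aS_succ, aS_succ] at h2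
    by_cases a : i ∈ S <;> by_cases b : i ∈ T <;> simp [a, b] at h2 ⊢ <;> omega
  ext i
  by_cases hi : i < d
  · exact key i hi
  · exact ⟨fun h => absurd (Finset.mem_range.1 (hS h)) hi, fun h => absurd (Finset.mem_range.1 (hT h)) hi⟩

/-- selecting a chain from a redundantly indexed chain -/
theorem select {d : ℕ} {P : Set (Euc d)} {p : ℕ} (A : ℕ → Set (Euc d)) (n : ℕ)
    (hpf : ∀ i ≤ n, PF P (A i)) (hm : ∀ i j, i ≤ j → j ≤ n → A i ⊆ A j)
    (h0 : rk (A 0) = 0) (hs : ∀ i < n, rk (A (i+1)) ≤ rk (A i) + 1) (hn : rk (A n) = p) :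
    ∃ c, IsRF P p c ∧ ∀ i ≤ n, c (rk (A i)) = A i := by
  have hex : ∀ j, ∃ i, j ≤ p → i ≤ n ∧ rk (A i) = j := by
    intro j
    by_cases hj : j ≤ p
    · obtain ⟨i, h⟩ := divt (fun i => rk (A i)) n h0 hs j (by simpa [hn] using hj)
      exact ⟨i, fun _ => h⟩
    · exact ⟨0, fun h => absurd h hj⟩
  choose s hs' using hex
  classical
  refine ⟨fun j => if j ≤ p then A (s j) else P, ⟨?_, ?_, ?_, ?_⟩, ?_⟩
  · intro i hi
    simp only [hi, if_true]
    exact hpf _ (hs' i hi).1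
  · intro i hi
    simp only [hi, if_true]
    exact (hs' i hi).2
  · intro i j hij hj
    have hi : i ≤ p := hij.trans hj
    simp only [hi, hj, if_true]
    rcases hij.eq_or_lt with rfl | hij
    · exact Set.Subset.rfl
    · apply hm _ _ _ (hs' j hj).1
      by_contra hc
      have := rk_mono (hm (s j) (s i) (by omega) (hs' i hi).1)
      rw [(hs' j hj).2, (hs' i hi).2] at this
      omega
  · intro i hi
    simp [hi]
  · intro i hi
    have hle : rk (A i) ≤ p := hn ▸ rk_mono (hm i n hi le_rfl)
    simp only [hle, if_true]
    have := hs' _ hle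
    rcases le_total i (s (rk (A i))) with h | h
    · exact ((hpf i hi).eq_of_rk (hpf _ this.1) (hm _ _ h this.1) this.2.symm).symm
    · exact (hpf _ this.1).eq_of_rk (hpf i hi) (hm _ _ h hi) this.2

theorem IsRF.ext {d : ℕ} {P : Set (Euc d)} {k : ℕ} {a b : ℕ → Set (Euc d)} (ha : IsRF P k a)
    (hb : IsRF P k b) (h : ∀ i ≤ k, a i = b i) : a = b := by
  funext i
  by_cases hi : i ≤ k
  · exact h i hi
  · rw [ha.top i (by omega), hb.top i (by omega)]

def joinSeq {d : ℕ} (P Q : Set (Euc d)) (c e : ℕ → Set (Euc d)) (S : Finset ℕ) (n i : ℕ) :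
    Set (Euc d) :=
  if i ≤ n then convexHull ℝ (c (aS S i) ∪ e (i - aS S i)) else convexHull ℝ (P ∪ Q)

theorem aS_bounds {S : Finset ℕ} {d p q : ℕ} (hS : S ∈ Finset.powersetCard p (Finset.range d))
    (hpq : p + q = d) {i : ℕ} (hi : i ≤ d) : aS S i ≤ p ∧ i - aS S i ≤ q := by
  rw [Finset.mem_powersetCard] at hS
  have h := aS_full hS.1
  have h1 := aS_mono S hi
  have h2 := bS_mono S hi
  omega

theorem main_count {d p q : ℕ} (U : Submodule ℝ (Euc d))
    (P Q : Set (Euc d)) (hPU : P ⊆ (U : Set (Euc d))) (hQU : Q ⊆ (Uᗮ : Set (Euc d)))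
    (hP : Convex ℝ P) (hQ : Convex ℝ Q) (zP : Z P) (zQ : Z Q)
    (hpd : sdim P = p) (hqd : sdim Q = q) (hpq : p + q = d) :
    Nat.card {c // IsRF (convexHull ℝ (P ∪ Q)) d c} =
      Nat.card {c // IsRF P p c} * Nat.card {c // IsRF Q q c} * Nat.choose d p := by
  have hPn : P.Nonempty := ⟨0, zP.1⟩
  have hQn : Q.Nonempty := ⟨0, zQ.1⟩
  have hch : Nat.choose d p = Nat.card {S // S ∈ Finset.powersetCard p (Finset.range d)} := by
    rw [Nat.card_eq_fintype_card, Fintype.card_coe, Finset.card_powersetCard, Finset.card_range]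
  rw [hch, ← Nat.card_prod, ← Nat.card_prod]
  symm
  have J := fun {F G : Set (Euc d)} (hF : PF P F) (hG : PF Q G) =>
    pf_join hP hQ hPn hQn hPU hQU hF hG
  have hrf : ∀ c e S, IsRF P p c → IsRF Q q e → S ∈ Finset.powersetCard p (Finset.range d) →
      IsRF (convexHull ℝ (P ∪ Q)) d (joinSeq P Q c e S d) := by
    intro c e S hc he hS
    refine ⟨?_, ?_, ?_, ?_⟩
    · intro i hi
      have hb := aS_bounds hS hpq hi
      simp only [joinSeq, hi, if_true]
      exact (J (hc.pf _ hb.1) (he.pf _ hb.2)).1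
    · intro i hi
      have hb := aS_bounds hS hpq hi
      simp only [joinSeq, hi, if_true]
      rw [rk_join ((hc.pf _ hb.1).sub.trans hPU) ((he.pf _ hb.2).sub.trans hQU), hc.rk _ hb.1,
        he.rk _ hb.2]
      have := aS_le S i
      omega
    · intro i j hij hj
      have hi := hij.trans hj
      have hb := aS_bounds hS hpq hj
      simp only [joinSeq, hi, hj, if_true]
      exact convexHull_mono (Set.union_subset_union (hc.mono _ _ (aS_mono S hij) hb.1)
        (he.mono _ _ (bS_mono S hij) hb.2))
    · intro i hi
      have : ¬ i ≤ d := by omega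
      simp [joinSeq, this]
  let φ : ({c // IsRF P p c} × {c // IsRF Q q c}) ×
      {S // S ∈ Finset.powersetCard p (Finset.range d)} → {c // IsRF (convexHull ℝ (P ∪ Q)) d c} :=
    fun x => ⟨joinSeq P Q x.1.1.1 x.1.2.1 x.2.1 d, hrf _ _ _ x.1.1.2 x.1.2.2 x.2.2⟩
  apply Nat.card_congr (Equiv.ofBijective φ ⟨?_, ?_⟩)
  · rintro ⟨⟨⟨c, hc⟩, ⟨e, he⟩⟩, ⟨S, hS⟩⟩ ⟨⟨⟨c', hc'⟩, ⟨e', he'⟩⟩, ⟨S', hS'⟩⟩ h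
    have h1 : joinSeq P Q c e S d = joinSeq P Q c' e' S' d := congrArg Subtype.val h
    have h2 : ∀ i ≤ d, c (aS S i) = c' (aS S' i) ∧ e (i - aS S i) = e' (i - aS S' i) := by
      intro i hi
      have hb := aS_bounds hS hpq hi
      have hb' := aS_bounds hS' hpq hi
      have h3 := congrFun h1 i
      simp only [joinSeq, hi, if_true] at h3
      have j1 := J (hc.pf _ hb.1) (he.pf _ hb.2)
      have j2 := J (hc'.pf _ hb'.1) (he'.pf _ hb'.2)
      exact ⟨by rw [← j1.2.1, ← j2.2.1, h3], by rw [← j1.2.2, ← j2.2.2, h3]⟩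
    have hSS : S = S' := by
      apply aS_inj (Finset.mem_powersetCard.1 hS).1 (Finset.mem_powersetCard.1 hS').1
      intro i hi
      rw [← hc.rk _ (aS_bounds hS hpq hi).1, (h2 i hi).1, hc'.rk _ (aS_bounds hS' hpq hi).1]
    subst hSS
    have hfull := aS_full (Finset.mem_powersetCard.1 hS).1
    rw [(Finset.mem_powersetCard.1 hS).2] at hfull
    have hcc : c = c' := by
      apply hc.ext hc'
      intro j hj
      obtain ⟨i, hi, rfl⟩ := divt (aS S) d (aS_zero S)
        (fun i _ => by rw [aS_succ]; split_ifs <;> omega) j (by omega)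
      exact (h2 i hi).1
    have hee : e = e' := by
      apply he.ext he'
      intro j hj
      obtain ⟨i, hi, rfl⟩ := divt (fun i => i - aS S i) d (by simp)
        (fun i _ => by simp only [aS_succ]; split_ifs <;> omega) j (by omega)
      exact (h2 i hi).2
    subst hcc hee
    rfl
  · rintro ⟨H, hH⟩
    have sp := fun i (hi : i ≤ d) => pf_split hP hQ hPn hQn (hH.pf i hi)
    have hsum : ∀ i ≤ d, rk (H i ∩ P) + rk (H i ∩ Q) = i := by
      intro i hi
      rw [← rk_join (Set.inter_subset_right.trans hPU) (Set.inter_subset_right.trans hQU),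
        (sp i hi).2.2, hH.rk i hi]
    have mP : ∀ i j, i ≤ j → j ≤ d → H i ∩ P ⊆ H j ∩ P := fun i j hij hj =>
      Set.inter_subset_inter_left _ (hH.mono i j hij hj)
    have mQ : ∀ i j, i ≤ j → j ≤ d → H i ∩ Q ⊆ H j ∩ Q := fun i j hij hj =>
      Set.inter_subset_inter_left _ (hH.mono i j hij hj)
    have b1 := (sp d le_rfl).1.rk_le zP
    have b2 := (sp d le_rfl).2.1.rk_le zQ
    have s0 := hsum 0 (Nat.zero_le _)
    have sd := hsum d le_rfl
    have step : ∀ i < d, rk (H i ∩ P) ≤ rk (H (i+1) ∩ P) ∧ rk (H i ∩ Q) ≤ rk (H (i+1) ∩ Q) ∧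
        rk (H (i+1) ∩ P) + rk (H (i+1) ∩ Q) = rk (H i ∩ P) + rk (H i ∩ Q) + 1 := by
      intro i hi
      refine ⟨rk_mono (mP _ _ (by omega) hi), rk_mono (mQ _ _ (by omega) hi), ?_⟩
      rw [hsum i hi.le, hsum (i+1) hi]
    obtain ⟨c, hc, hcA⟩ := select (P := P) (p := p) (fun i => H i ∩ P) d (fun i hi => (sp i hi).1)
      mP (by omega) (fun i hi => by have := step i hi; omega)
      (by omega)
    obtain ⟨e, he, heA⟩ := select (P := Q) (p := q) (fun i => H i ∩ Q) d (fun i hi => (sp i hi).2.1)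
      mQ (by omega) (fun i hi => by have := step i hi; omega)
      (by omega)
    have hpath := aS_path (fun i => rk (H i ∩ P)) d (by omega)
      (fun i hi => by have := step i hi; omega)
    set S := (Finset.range d).filter (fun i => rk (H (i+1) ∩ P) = rk (H i ∩ P) + 1) with hSdef
    have hSsub : S ⊆ Finset.range d := Finset.filter_subset _ _
    have hS : S ∈ Finset.powersetCard p (Finset.range d) := by
      rw [Finset.mem_powersetCard]
      refine ⟨hSsub, ?_⟩
      rw [← aS_full hSsub, hpath d le_rfl]
      omega
    refine ⟨⟨⟨⟨c, hc⟩, ⟨e, he⟩⟩, ⟨S, hS⟩⟩, ?_⟩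
    apply Subtype.ext
    apply (hrf c e S hc he hS).ext hH
    intro i hi
    have x1 := hpath i hi
    have x2 : i - aS S i = rk (H i ∩ Q) := by
      have := hsum i hi
      omega
    simp only [joinSeq, hi, if_true]
    rw [x2, x1]
    have y1 := hcA i hi
    have y2 := heA i hi
    rw [y1, y2, (sp i hi).2.2]

/-- Flags of a free sum: if `P ⊆ U` and `Q ⊆ Uᗮ` are polytopes with `0` in their relative
interiors, of dimensions `p` and `q` with `p + q = d`, then
`flags(conv(P ∪ Q)) = flags(P) · flags(Q) · C(d, p)`. -/
theorem stmt_4 {d p q : ℕ} (U : Submodule ℝ (Euc d))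
    (P Q : Set (Euc d)) (hPU : P ⊆ (U : Set (Euc d))) (hQU : Q ⊆ (Uᗮ : Set (Euc d)))
    (hP : IsPolytope P) (hQ : IsPolytope Q)
    (hP0 : (0 : Euc d) ∈ intrinsicInterior ℝ P) (hQ0 : (0 : Euc d) ∈ intrinsicInterior ℝ Q)
    (hpd : sdim P = p) (hqd : sdim Q = q) (hpq : p + q = d) :
    Nat.card (FullFlag (convexHull ℝ (P ∪ Q)) d)
      = Nat.card (FullFlag P p) * Nat.card (FullFlag Q q) * Nat.choose d p := by
  have zP := z_of_int hP0
  have zQ := z_of_int hQ0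
  have cP : Convex ℝ P := by
    obtain ⟨V, _, rfl⟩ := hP
    exact convex_convexHull ℝ V
  have cQ : Convex ℝ Q := by
    obtain ⟨V, _, rfl⟩ := hQ
    exact convex_convexHull ℝ V
  have zR := z_join zP zQ
  have hR : sdim (convexHull ℝ (P ∪ Q)) = d := by
    rw [← rk_eq_sdim zR.1, rk_join hPU hQU, rk_eq_sdim zP.1, rk_eq_sdim zQ.1, hpd, hqd, hpq]
  rw [Nat.card_congr (flagEquiv zR hR), Nat.card_congr (flagEquiv zP hpd),
    Nat.card_congr (flagEquiv zQ hqd)]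
  exact main_count U P Q hPU hQU cP cQ zP zQ hpd hqd hpq
end
end

section
/- Let Π_3 be the graph on vertices {1,2,3,4} with edges {1,2}, {2,3}, {3,4}, and let C(Π_3) ⊂ R^4 be the convex hull of the 12 points (±1,±1,0,0), (0,±1,±1,0), (0,0,±1,±1). Then C(Π_3) has exactly 448 full flags; in particular more than 2^4 · 4! = 384. -/
open RealInnerProductSpace

noncomputable section

/-- The vertices `(±1,±1,0,0), (0,±1,±1,0), (0,0,±1,±1)` of `C(Π₃) ⊂ ℝ⁴`. -/
def piVerts : Set (Euc 4) :=
  {x | ∃ s t : ℝ, (s = 1 ∨ s = -1) ∧ (t = 1 ∨ t = -1) ∧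
    (x = s • EuclideanSpace.single 0 (1 : ℝ) + t • EuclideanSpace.single 1 (1 : ℝ) ∨
     x = s • EuclideanSpace.single 1 (1 : ℝ) + t • EuclideanSpace.single 2 (1 : ℝ) ∨
     x = s • EuclideanSpace.single 2 (1 : ℝ) + t • EuclideanSpace.single 3 (1 : ℝ))}

section helpers

abbrev Ix := Fin 3 × Bool × Bool

def ixOf (i : Fin 12) : Ix := (⟨i.val / 4, by omega⟩, i.val.testBit 1, i.val.testBit 0)

theorem ixOf_surj : Function.Surjective ixOf := by unfold Function.Surjective; decide

def sgZ (b : Bool) : ℤ := if b then 1 else -1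

def valZ (q : Fin 4 → ℤ) (p : Ix) : ℤ := sgZ p.2.1 * q p.1.castSucc + sgZ p.2.2 * q p.1.succ

def valR (q : Fin 4 → ℝ) (p : Ix) : ℝ :=
  (sgZ p.2.1 : ℝ) * q p.1.castSucc + (sgZ p.2.2 : ℝ) * q p.1.succ

def vx (p : Ix) : Euc 4 :=
  (sgZ p.2.1 : ℝ) • EuclideanSpace.single p.1.castSucc (1 : ℝ) +
    (sgZ p.2.2 : ℝ) • EuclideanSpace.single p.1.succ (1 : ℝ)

theorem piVerts_eq : piVerts = Set.range vx := by
  ext x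
  constructor
  · rintro ⟨s, t, hs, ht, h⟩
    have key : ∀ s : ℝ, (s = 1 ∨ s = -1) → ∃ b, (sgZ b : ℝ) = s := by
      rintro s (rfl | rfl)
      · exact ⟨true, by simp [sgZ]⟩
      · exact ⟨false, by simp [sgZ]⟩
    obtain ⟨b, rfl⟩ := key s hs
    obtain ⟨c, rfl⟩ := key t ht
    rcases h with rfl | rfl | rfl
    · exact ⟨(0, b, c), rfl⟩
    · exact ⟨(1, b, c), rfl⟩
    · exact ⟨(2, b, c), rfl⟩
  · rintro ⟨⟨k, b, c⟩, rfl⟩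
    have key : ∀ b, ((sgZ b : ℝ) = 1 ∨ (sgZ b : ℝ) = -1) := by
      rintro (_ | _) <;> simp [sgZ]
    refine ⟨sgZ b, sgZ c, key b, key c, ?_⟩
    fin_cases k
    · exact Or.inl rfl
    · exact Or.inr (Or.inl rfl)
    · exact Or.inr (Or.inr rfl)

abbrev PP : Set (Euc 4) := convexHull ℝ piVerts

theorem piVerts_fin : piVerts.Finite := by rw [piVerts_eq]; exact Set.finite_range _

theorem vx_mem (p : Ix) : vx p ∈ PP :=
  subset_convexHull ℝ _ (by rw [piVerts_eq]; exact ⟨p, rfl⟩)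

theorem PP_compact : IsCompact PP := piVerts_fin.isCompact_convexHull ℝ

theorem le_of_verts (l : StrongDual ℝ (Euc 4)) (m : ℝ) (h : ∀ p, l (vx p) ≤ m) :
    ∀ y ∈ PP, l y ≤ m := by
  intro y hy
  have : PP ⊆ {y | l y ≤ m} := by
    apply convexHull_min
    · rw [piVerts_eq]
      rintro _ ⟨p, rfl⟩
      exact h p
    · exact convex_halfSpace_le l.toLinearMap.isLinear m
  exact this hy

/-- inclusion of exposed faces is detected on vertices -/
theorem face_sub {F G : Set (Euc 4)} (hF : IsExposed ℝ PP F) (hG : IsExposed ℝ PP G)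
    (h : ∀ p, vx p ∈ F → vx p ∈ G) : F ⊆ G := by
  have hFc := hF.isCompact PP_compact
  have hFv := hF.convex (convex_convexHull ℝ _)
  rw [← closure_convexHull_extremePoints hFc hFv]
  apply closure_minimal _ (hG.isClosed PP_compact.isClosed)
  apply convexHull_min _ (hG.convex (convex_convexHull ℝ _))
  intro x hx
  have h1 := hF.isExtreme.extremePoints_subset_extremePoints hx
  have h2 := extremePoints_convexHull_subset h1
  rw [piVerts_eq] at h2
  obtain ⟨p, rfl⟩ := h2
  exact h p (extremePoints_subset hx)

theorem sdim_lt {F G : Set (Euc 4)} (hF : IsExposed ℝ PP F) (hFn : F.Nonempty)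
    (hG : G ⊆ PP) (hs : F ⊂ G) : sdim F < sdim G := by
  obtain ⟨l, rfl⟩ := hF hFn
  obtain ⟨x, hx⟩ := hFn
  obtain ⟨y, hyG, hyF⟩ := Set.exists_of_ssubset hs
  apply Submodule.finrank_lt_finrank_of_lt
  refine lt_of_le_of_ne (vectorSpan_mono ℝ hs.1) ?_
  intro heq
  have h1 : y - x ∈ vectorSpan ℝ G := vsub_mem_vectorSpan ℝ hyG (hs.1 hx)
  rw [← heq] at h1
  have h2 : vectorSpan ℝ {x ∈ PP | ∀ y ∈ PP, l y ≤ l x} ≤ LinearMap.ker l.toLinearMap := by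
    unfold vectorSpan
    rw [Submodule.span_le]
    rintro _ ⟨a, ha, b, hb, rfl⟩
    have e1 := ha.2 b hb.1
    have e2 := hb.2 a ha.1
    simp
    linarith
  have h3 := h2 h1
  simp at h3
  apply hyF
  refine ⟨hG hyG, fun z hz => ?_⟩
  have := hx.2 z hz
  linarith

open Classical in
def mk (F : Set (Euc 4)) : ℕ := Nat.ofBits (fun i : Fin 12 => decide (vx (ixOf i) ∈ F))

theorem mk_bit (F : Set (Euc 4)) (i : Fin 12) : (mk F).testBit i = true ↔ vx (ixOf i) ∈ F := by
  unfold mk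
  rw [Nat.testBit_ofBits_lt _ _ i.2]
  simp

theorem mk_lt (F : Set (Euc 4)) : mk F < 4096 := Nat.ofBits_lt_two_pow _

theorem land_iff {n m : ℕ} (hn : n < 4096) :
    n &&& m = n ↔ ∀ i : Fin 12, n.testBit i = true → m.testBit i = true := by
  constructor
  · intro h i hi
    rw [← h, Nat.testBit_and] at hi
    simp at hi
    exact hi.2
  · intro h
    apply Nat.eq_of_testBit_eq
    intro i
    rw [Nat.testBit_and]
    by_cases hi : i < 12
    · have := h ⟨i, hi⟩
      simp at this
      cases hh : n.testBit i <;> simp_all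
    · have : n.testBit i = false := by
        apply Nat.testBit_lt_two_pow
        calc n < 2 ^ 12 := hn
          _ ≤ 2 ^ i := Nat.pow_le_pow_right (by norm_num) (by omega)
      simp [this]

theorem mk_sub {F G : Set (Euc 4)} (hF : IsExposed ℝ PP F) (hG : IsExposed ℝ PP G) :
    F ⊆ G ↔ mk F &&& mk G = mk F := by
  rw [land_iff (mk_lt F)]
  simp only [mk_bit]
  constructor
  · intro h i hi
    exact h hi
  · intro h
    apply face_sub hF hG
    intro p
    obtain ⟨i, rfl⟩ := ixOf_surj p
    exact h i

theorem mk_inj {F G : Set (Euc 4)} (hF : IsExposed ℝ PP F) (hG : IsExposed ℝ PP G)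
    (h : mk F = mk G) : F = G := by
  apply Set.Subset.antisymm
  · rw [mk_sub hF hG, h, Nat.and_self]
  · rw [mk_sub hG hF, h, Nat.and_self]

theorem dual_vx (l : StrongDual ℝ (Euc 4)) (p : Ix) :
    l (vx p) = valR (fun i => l (EuclideanSpace.single i (1 : ℝ))) p := by
  simp [vx, valR]

theorem mem_expo (l : StrongDual ℝ (Euc 4)) (p : Ix) :
    vx p ∈ {x ∈ PP | ∀ y ∈ PP, l y ≤ l x} ↔
      ∀ r, valR (fun i => l (EuclideanSpace.single i (1 : ℝ))) r ≤
        valR (fun i => l (EuclideanSpace.single i (1 : ℝ))) p := by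
  simp only [← dual_vx]
  constructor
  · intro h r
    exact h.2 _ (vx_mem r)
  · intro h
    exact ⟨vx_mem p, le_of_verts l _ h⟩

def LL : List ℕ := [1, 2, 3, 4, 8, 12, 16, 17, 20, 32, 33, 36, 53, 64, 66, 72, 128, 130, 136, 202,
  256, 257, 258, 259, 260, 264, 268, 272, 273, 276, 320, 322, 328, 512, 513, 514, 515, 516, 520,
  524, 528, 529, 532, 576, 578, 584, 848, 851, 860, 1024, 1025, 1026, 1027, 1028, 1032, 1036, 1056,
  1057, 1060, 1152, 1154, 1160, 1280, 1281, 1282, 1283, 1284, 1288, 1292, 1333, 1482, 2048, 2049,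
  2050, 2051, 2052, 2056, 2060, 2080, 2081, 2084, 2176, 2178, 2184, 2560, 2561, 2562, 2563, 2564,
  2568, 2572, 2613, 2762, 3232, 3235, 3244]

def NN : List (ℕ × (Fin 4 → ℤ)) :=
  [(2572, ![1, 0, 0, 1]), (1292, ![1, 0, 0, -1]), (2563, ![-1, 0, 0, 1]), (1283, ![-1, 0, 0, -1]),
   (2762, ![0, 1, 0, 1]), (1482, ![0, 1, 0, -1]), (2613, ![0, -1, 0, 1]), (1333, ![0, -1, 0, -1]),
   (3244, ![1, 0, 1, 0]), (860, ![1, 0, -1, 0]), (3235, ![-1, 0, 1, 0]), (851, ![-1, 0, -1, 0])]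

def qq (n : ℕ) (i : Fin 4) : ℤ :=
  NN.foldr (fun a z => if n &&& a.1 = n then a.2 i + z else z) 0

theorem LL_expo : ∀ n ∈ LL, ∀ i : Fin 12,
    (n.testBit i = true ↔ ∀ j : Fin 12, valZ (qq n) (ixOf j) ≤ valZ (qq n) (ixOf i)) := by
  decide +kernel

theorem LL_pos : ∀ n ∈ LL, n < 4096 ∧ (∃ i : Fin 12, n.testBit i = true) ∧
    (∃ i : Fin 12, ¬ n.testBit i = true) := by
  decide +kernel

def lq (n : ℕ) : StrongDual ℝ (Euc 4) := ∑ i, (qq n i : ℝ) • EuclideanSpace.proj i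

theorem lq_single (n : ℕ) (i : Fin 4) : lq n (EuclideanSpace.single i (1 : ℝ)) = (qq n i : ℝ) := by
  simp [lq]

def fc (n : ℕ) : Set (Euc 4) := {x ∈ PP | ∀ y ∈ PP, lq n y ≤ lq n x}

theorem fc_expo (n : ℕ) : IsExposed ℝ PP (fc n) := fun _ => ⟨lq n, rfl⟩

theorem fc_bit {n : ℕ} (hn : n ∈ LL) (i : Fin 12) : n.testBit i = true ↔ vx (ixOf i) ∈ fc n := by
  unfold fc
  rw [mem_expo, LL_expo n hn i]
  simp only [lq_single]
  have : ∀ p, valR (fun i => (qq n i : ℝ)) p = ((valZ (qq n) p : ℤ) : ℝ) := by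
    intro p; simp [valR, valZ]
  simp only [this, Int.cast_le]
  constructor
  · intro h r
    obtain ⟨j, rfl⟩ := ixOf_surj r
    exact h j
  · intro h j
    exact h _

theorem mk_fc {n : ℕ} (hn : n ∈ LL) : mk (fc n) = n := by
  have h1 : mk (fc n) &&& n = mk (fc n) := by
    rw [land_iff (mk_lt _)]
    intro i
    rw [mk_bit, fc_bit hn]
    exact id
  have h2 : n &&& mk (fc n) = n := by
    rw [land_iff (LL_pos n hn).1]
    intro i
    rw [mk_bit, fc_bit hn]
    exact id
  rw [← h1, Nat.and_comm, h2]

theorem fc_nonempty {n : ℕ} (hn : n ∈ LL) : (fc n).Nonempty := by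
  obtain ⟨i, hi⟩ := (LL_pos n hn).2.1
  exact ⟨_, (fc_bit hn i).1 hi⟩

theorem fc_proper {n : ℕ} (hn : n ∈ LL) : fc n ⊂ PP := by
  refine (fc_expo n).subset.ssubset_of_ne ?_
  intro h
  obtain ⟨i, hi⟩ := (LL_pos n hn).2.2
  apply hi
  rw [fc_bit hn, h]
  exact vx_mem _

def ssb (n m : ℕ) : Prop := n &&& m = n ∧ n ≠ m

instance (n m : ℕ) : Decidable (ssb n m) := inferInstanceAs (Decidable (_ ∧ _))

theorem mk_ssub {F G : Set (Euc 4)} (hF : IsExposed ℝ PP F) (hG : IsExposed ℝ PP G) :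
    F ⊂ G ↔ ssb (mk F) (mk G) := by
  unfold ssb
  rw [← mk_sub hF hG, Set.ssubset_iff_subset_ne]
  constructor
  · rintro ⟨h, h'⟩
    exact ⟨h, fun e => h' (mk_inj hF hG e)⟩
  · rintro ⟨h, h'⟩
    exact ⟨h, fun e => h' (by rw [e])⟩

theorem fc_ssub {n m : ℕ} (hn : n ∈ LL) (hm : m ∈ LL) (h : ssb n m) : fc n ⊂ fc m := by
  rw [mk_ssub (fc_expo n) (fc_expo m), mk_fc hn, mk_fc hm]
  exact h

theorem fc_dims {a b c d : ℕ} (ha : a ∈ LL) (hb : b ∈ LL) (hc : c ∈ LL) (hd : d ∈ LL)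
    (hab : ssb a b) (hbc : ssb b c) (hcd : ssb c d) :
    sdim (fc a) = 0 ∧ sdim (fc b) = 1 ∧ sdim (fc c) = 2 ∧ sdim (fc d) = 3 ∧ sdim PP = 4 := by
  have h1 := sdim_lt (fc_expo a) (fc_nonempty ha) (fc_expo b).subset (fc_ssub ha hb hab)
  have h2 := sdim_lt (fc_expo b) (fc_nonempty hb) (fc_expo c).subset (fc_ssub hb hc hbc)
  have h3 := sdim_lt (fc_expo c) (fc_nonempty hc) (fc_expo d).subset (fc_ssub hc hd hcd)
  have h4 := sdim_lt (fc_expo d) (fc_nonempty hd) subset_rfl (fc_proper hd)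
  have h5 : sdim PP ≤ 4 := by
    have := Submodule.finrank_le (vectorSpan ℝ PP)
    rw [finrank_euclideanSpace_fin] at this
    exact this
  omega

theorem sdim_PP : sdim PP = 4 :=
  (fc_dims (a := 1) (b := 3) (c := 259) (d := 1283) (by decide) (by decide) (by decide) (by decide)
    (by decide) (by decide) (by decide)).2.2.2.2

/-! Classification of maximal vertex sets. -/

def okS (b : Bool) (s : SignType) : Bool := if b then s != -1 else s != 1

def topk (k : Fin 3) (e1 e2 e3 : SignType) : Bool :=
  if k = 0 then e1 != -1 && e3 != -1 else if k = 1 then e1 != 1 && e2 != -1 else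
    e2 != 1 && e3 != 1

def pred (q : Fin 4 → SignType) (e1 e2 e3 : SignType) (p : Ix) : Bool :=
  topk p.1 e1 e2 e3 && (okS p.2.1 (q p.1.castSucc) && okS p.2.2 (q p.1.succ))

def cons1 (s t e : SignType) : Bool :=
  (s != 0 || (if t = 0 then e == 0 else e == -1)) && (t != 0 || s == 0 || e == 1)

def cons2 (e f g : SignType) : Bool :=
  (e == -1 || f == -1 || (if e = 0 then g == f else g == 1)) &&
  (e == 1 || f == 1 || (if e = 0 then g == f else g == -1))

theorem classify : ∀ e1 e2 e3 : SignType, cons2 e1 e2 e3 = true →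
    ∀ s0 s2 : SignType, cons1 s0 s2 e1 = true → ∀ s1 s3 : SignType, cons1 s1 s3 e2 = true →
    (Nat.ofBits (fun i : Fin 12 => pred ![s0, s1, s2, s3] e1 e2 e3 (ixOf i))) ∈ 4095 :: LL := by
  decide +kernel

theorem cons1_real (x y : ℝ) :
    cons1 (SignType.sign x) (SignType.sign y) (SignType.sign (|x| - |y|)) = true := by
  rcases eq_or_ne x 0 with rfl | hx
  · rcases eq_or_ne y 0 with rfl | hy
    · simp [cons1]
    · have : |(0:ℝ)| - |y| < 0 := by simpa using hy
      rw [sign_neg this]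
      simp [cons1, hy]
  · rcases eq_or_ne y 0 with rfl | hy
    · have : 0 < |x| - |(0:ℝ)| := by simpa using hx
      rw [sign_pos this]
      simp [cons1, hx]
    · simp [cons1, hx, hy]

theorem cons2_real (x y : ℝ) :
    cons2 (SignType.sign x) (SignType.sign y) (SignType.sign (x + y)) = true := by
  rcases lt_trichotomy x 0 with h | rfl | h
  · rcases lt_trichotomy y 0 with h' | rfl | h'
    · rw [sign_neg h, sign_neg h', sign_neg (by linarith)]; decide
    · rw [sign_neg h, sign_zero, sign_neg (by linarith)]; decide
    · rw [sign_neg h, sign_pos h']; generalize SignType.sign (x + y) = z; revert z; decide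
  · rw [zero_add, sign_zero]; generalize SignType.sign y = z; revert z; decide
  · rcases lt_trichotomy y 0 with h' | rfl | h'
    · rw [sign_pos h, sign_neg h']; generalize SignType.sign (x + y) = z; revert z; decide
    · rw [sign_pos h, sign_zero, sign_pos (by linarith)]; decide
    · rw [sign_pos h, sign_pos h', sign_pos (by linarith)]; decide

theorem sign_ne_neg_one (x : ℝ) : SignType.sign x ≠ -1 ↔ 0 ≤ x := by
  rw [ne_eq, sign_eq_neg_one_iff, not_lt]

theorem sign_ne_one (x : ℝ) : SignType.sign x ≠ 1 ↔ x ≤ 0 := by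
  rw [ne_eq, sign_eq_one_iff, not_lt]

theorem okS_real (b : Bool) (x : ℝ) :
    okS b (SignType.sign x) = true ↔ (sgZ b : ℝ) * x = |x| := by
  cases b
  · simp [okS, sgZ, -sign_eq_one_iff]
    rw [← ne_eq, sign_ne_one, eq_comm, abs_eq_neg_self]
  · simp [okS, sgZ, -sign_eq_neg_one_iff]
    rw [← ne_eq, sign_ne_neg_one, eq_comm, abs_eq_self]

def tot (q : Fin 4 → ℝ) (k : Fin 3) : ℝ := |q k.castSucc| + |q k.succ|

theorem topk_real (q : Fin 4 → ℝ) (k : Fin 3) :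
    topk k (SignType.sign (|q 0| - |q 2|)) (SignType.sign (|q 1| - |q 3|))
      (SignType.sign ((|q 0| - |q 2|) + (|q 1| - |q 3|))) = true ↔ ∀ r, tot q r ≤ tot q k := by
  have e : ∀ r, tot q r = ![|q 0| + |q 1|, |q 1| + |q 2|, |q 2| + |q 3|] r := by
    intro r; fin_cases r <;> rfl
  simp only [e, Fin.forall_fin_succ]
  fin_cases k <;>
    simp only [topk, Fin.zero_eta, Fin.mk_one, Fin.reduceFinMk, if_true, Bool.and_eq_true,
      bne_iff_ne, sign_ne_neg_one, sign_ne_one, Fin.isValue, one_ne_zero, if_false,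
      Fin.reduceEq] <;>
    simp <;> constructor <;> intro h <;> (try constructor) <;> (try constructor) <;> linarith [h.1, h.2]

theorem sg_le (b : Bool) (x : ℝ) : (sgZ b : ℝ) * x ≤ |x| := by
  cases b
  · simpa [sgZ] using neg_le_abs x
  · simpa [sgZ] using le_abs_self x

theorem sg_ex (x : ℝ) : ∃ b, (sgZ b : ℝ) * x = |x| := by
  rcases abs_choice x with h | h
  · exact ⟨true, by simp [sgZ, h]⟩
  · exact ⟨false, by simp [sgZ, h]⟩

theorem pred_real (q : Fin 4 → ℝ) (p : Ix) :
    pred ![SignType.sign (q 0), SignType.sign (q 1), SignType.sign (q 2), SignType.sign (q 3)]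
      (SignType.sign (|q 0| - |q 2|)) (SignType.sign (|q 1| - |q 3|))
      (SignType.sign ((|q 0| - |q 2|) + (|q 1| - |q 3|))) p = true ↔
      ∀ r, valR q r ≤ valR q p := by
  have e : ![SignType.sign (q 0), SignType.sign (q 1), SignType.sign (q 2), SignType.sign (q 3)]
      = fun i => SignType.sign (q i) := by
    funext i; fin_cases i <;> rfl
  rw [e]
  obtain ⟨k, s, t⟩ := p
  simp only [pred, Bool.and_eq_true, topk_real, okS_real]
  constructor
  · rintro ⟨h, h1, h2⟩ ⟨k', s', t'⟩
    have := h k'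
    simp only [valR, tot] at *
    linarith [sg_le s' (q k'.castSucc), sg_le t' (q k'.succ)]
  · intro h
    have H : ∀ k', tot q k' ≤ valR q (k, s, t) := by
      intro k'
      obtain ⟨b, hb⟩ := sg_ex (q k'.castSucc)
      obtain ⟨c, hc⟩ := sg_ex (q k'.succ)
      have := h (k', b, c)
      simp only [valR, tot] at *
      linarith
    have h0 := H k
    have h1 := sg_le s (q k.castSucc)
    have h2 := sg_le t (q k.succ)
    refine ⟨fun r => (H r).trans ?_, ?_, ?_⟩
    · simp only [valR, tot] at *
      linarith
    · simp only [valR, tot] at *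
      linarith
    · simp only [valR, tot] at *
      linarith

theorem mk_mem {F : Set (Euc 4)} (hF : IsExposed ℝ PP F) (hn : F.Nonempty) :
    mk F ∈ 4095 :: LL := by
  obtain ⟨l, rfl⟩ := hF hn
  set q : Fin 4 → ℝ := fun i => l (EuclideanSpace.single i (1 : ℝ)) with hq
  have := classify _ _ _ (cons2_real (|q 0| - |q 2|) (|q 1| - |q 3|)) _ _
    (cons1_real (q 0) (q 2)) _ _ (cons1_real (q 1) (q 3))
  convert this using 1
  unfold mk
  congr 1
  funext i
  rw [Bool.eq_iff_iff, pred_real, ← mem_expo]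
  simp only [decide_eq_true_eq]

theorem mk_mem' {F : Set (Euc 4)} (hF : IsExposed ℝ PP F) (hn : F.Nonempty) (hd : sdim F < 4) :
    mk F ∈ LL := by
  rcases List.mem_cons.1 (mk_mem hF hn) with h | h
  · exfalso
    have : mk F = mk PP := by
      rw [h]
      have : mk PP = Nat.ofBits (fun _ : Fin 12 => true) := by
        unfold mk
        congr 1
        funext i
        simpa using vx_mem _
      rw [this]
      decide
    have e := mk_inj hF (IsExposed.refl PP) this
    rw [e, sdim_PP] at hd
    exact lt_irrefl _ hd
  · exact h

/-! Counting. -/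

def LF : Finset ℕ := ⟨LL, by decide +kernel⟩

def chains : Finset (Σ _ : ℕ, Σ _ : ℕ, Σ _ : ℕ, ℕ) :=
  LF.sigma fun a => (LF.filter (ssb a)).sigma fun b => (LF.filter (ssb b)).sigma fun c =>
    LF.filter (ssb c)

theorem chains_card : chains.card = 448 := by
  unfold chains
  simp only [Finset.card_sigma]
  decide +kernel

theorem mem_chains (a b c d : ℕ) : (⟨a, b, c, d⟩ : Σ _ : ℕ, Σ _ : ℕ, Σ _ : ℕ, ℕ) ∈ chains ↔
    a ∈ LL ∧ (b ∈ LL ∧ ssb a b) ∧ (c ∈ LL ∧ ssb b c) ∧ (d ∈ LL ∧ ssb c d) := by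
  have : ∀ x, x ∈ LF ↔ x ∈ LL := fun x => Iff.rfl
  simp [chains, this]

attribute [irreducible] LL LF chains

def toC (f : FullFlag PP 4) : Σ _ : ℕ, Σ _ : ℕ, Σ _ : ℕ, ℕ :=
  ⟨mk (f.face 0), mk (f.face 1), mk (f.face 2), mk (f.face 3)⟩

theorem flag_ssb (f : FullFlag PP 4) (i j : ℕ) (hij : i < j) (hj : j < 4) :
    ssb (mk (f.face i)) (mk (f.face j)) := by
  rw [← mk_ssub (f.exposed i (by omega)) (f.exposed j hj)]
  refine (f.chain i j hij hj).ssubset_of_ne ?_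
  intro h
  have h1 := f.dim_eq i (by omega)
  have h2 := f.dim_eq j hj
  rw [h] at h1
  omega

theorem flag_mem (f : FullFlag PP 4) (i : ℕ) (hi : i < 4) : mk (f.face i) ∈ LL :=
  mk_mem' (f.exposed i hi) (f.nonempty i hi) (by rw [f.dim_eq i hi]; exact hi)

theorem toC_mem (f : FullFlag PP 4) : toC f ∈ chains := by
  unfold toC
  rw [mem_chains]
  exact ⟨flag_mem f 0 (by omega), ⟨flag_mem f 1 (by omega), flag_ssb f 0 1 (by omega) (by omega)⟩,
    ⟨flag_mem f 2 (by omega), flag_ssb f 1 2 (by omega) (by omega)⟩,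
    ⟨flag_mem f 3 (by omega), flag_ssb f 2 3 (by omega) (by omega)⟩⟩

theorem toC_inj : Function.Injective toC := by
  intro f g h
  have h4 : ∀ i < 4, mk (f.face i) = mk (g.face i) := by
    unfold toC at h
    simp only [Sigma.mk.injEq, heq_eq_eq] at h
    intro i hi
    interval_cases i
    · exact h.1
    · exact h.2.1
    · exact h.2.2.1
    · exact h.2.2.2
  have hf : f.face = g.face := by
    funext i
    by_cases hi : i < 4
    · exact mk_inj (f.exposed i hi) (g.exposed i hi) (h4 i hi)
    · rw [f.top i (by omega), g.top i (by omega)]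
  cases f
  cases g
  simp at hf
  subst hf
  rfl

theorem toC_surj (x : Σ _ : ℕ, Σ _ : ℕ, Σ _ : ℕ, ℕ) (hx : x ∈ chains) : ∃ f, toC f = x := by
  obtain ⟨a, b, c, d⟩ := x
  rw [mem_chains] at hx
  obtain ⟨ha, ⟨hb, hab⟩, ⟨hc, hbc⟩, ⟨hd, hcd⟩⟩ := hx
  obtain ⟨d0, d1, d2, d3, -⟩ := fc_dims ha hb hc hd hab hbc hcd
  have s1 := (fc_ssub ha hb hab).1
  have s2 := (fc_ssub hb hc hbc).1
  have s3 := (fc_ssub hc hd hcd).1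
  let fa : ℕ → Set (Euc 4) := fun i => match i with
    | 0 => fc a
    | 1 => fc b
    | 2 => fc c
    | 3 => fc d
    | _ => PP
  refine ⟨⟨fa, ?_, ?_, ?_, ?_, ?_⟩, ?_⟩
  · intro i hi
    interval_cases i
    · exact fc_expo a
    · exact fc_expo b
    · exact fc_expo c
    · exact fc_expo d
  · intro i hi
    interval_cases i
    · exact fc_nonempty ha
    · exact fc_nonempty hb
    · exact fc_nonempty hc
    · exact fc_nonempty hd
  · intro i hi
    interval_cases i
    · exact d0
    · exact d1
    · exact d2
    · exact d3
  · intro i j hij hj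
    interval_cases j
    · omega
    · interval_cases i
      exact s1
    · interval_cases i
      · exact s1.trans s2
      · exact s2
    · interval_cases i
      · exact s1.trans (s2.trans s3)
      · exact s2.trans s3
      · exact s3
  · intro i hi
    obtain ⟨k, rfl⟩ := Nat.exists_eq_add_of_le' hi
    rfl
  · show (⟨mk (fc a), mk (fc b), mk (fc c), mk (fc d)⟩ : Σ _ : ℕ, Σ _ : ℕ, Σ _ : ℕ, ℕ) = _
    rw [mk_fc ha, mk_fc hb, mk_fc hc, mk_fc hd]

theorem flags_card : Nat.card (FullFlag PP 4) = 448 := by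
  have e : FullFlag PP 4 ≃ chains := Equiv.ofBijective (fun f => ⟨toC f, toC_mem f⟩) (by
    constructor
    · intro f g h
      exact toC_inj (congrArg Subtype.val h)
    · rintro ⟨x, hx⟩
      obtain ⟨f, hf⟩ := toC_surj x hx
      exact ⟨f, Subtype.ext hf⟩)
  rw [Nat.card_congr e, Nat.card_eq_fintype_card, Fintype.card_coe, chains_card]

end helpers

/-- `C(Π₃)` has exactly `448` full flags; in particular more than `2^4 · 4! = 384`. -/
theorem stmt_18 :
    Nat.card (FullFlag (convexHull ℝ piVerts) 4) = 448 ∧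
      2 ^ 4 * Nat.factorial 4 < 448 := by
  exact ⟨flags_card, by decide⟩
end
end
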